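/- Let d be a prime, and let S be an abelian subgroup of the Pauli group G_d^n with no nontrivial scalars, generated by elements s_1, …, s_r that are independent in the sense that no s_i belongs to the subgroup generated by the remaining generators. Then Nat.card S = d^r, and consequently the fixed subspace Fix(S) has complex dimension 1 if and only if r = n. -/

import Mathlib

/-!
The idea is that `S` is an elementary abelian `d`-group acting on `(ℂ^d)^{⊗n}` by a multiple of the
regular representation.

The `d`-th power of a Pauli matrix is scalar, so `g ^ d = 1` for every `g ∈ S`. Hence `S` is a
vector space over `ZMod d`, independence of the generators is linear independence, and they form a
basis: `|S| = d ^ r`. A non-scalar Pauli matrix has trace zero, so the character of `S` on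
`(Fin n → ZMod d) → ℂ` vanishes away from `1`; averaging it gives `dim Fix(S) * |S| = d ^ n`.
-/

open Matrix

noncomputable def q (d : ℕ) : ℂ := Complex.exp (2 * Real.pi * Complex.I / d)

/-- Dot product of two vectors over `ZMod d`. -/
def dotp {n d : ℕ} (A B : Fin n → ZMod d) : ZMod d := ∑ i, A i * B i

/-- The Pauli word `W(U,V)` with entries `q^{⟨U,J⟩}` at `(J, K)` when `J = K + V`. -/
noncomputable def PauliWord (d n : ℕ) (U V : Fin n → ZMod d) :
    Matrix (Fin n → ZMod d) (Fin n → ZMod d) ℂ :=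
  Matrix.of fun J K => if J = K + V then q d ^ (dotp U J).val else 0

/-- The n-qudit Pauli group, as a set of matrices. -/
noncomputable def PauliSet (d n : ℕ) : Set (Matrix (Fin n → ZMod d) (Fin n → ZMod d) ℂ) :=
  {g | ∃ (k : ZMod d) (U V : Fin n → ZMod d), g = q d ^ k.val • PauliWord d n U V}

/-- The subspace of states fixed by every matrix in `S`. -/
noncomputable def FixSubspace (d n : ℕ) [NeZero d]
    (S : Set (Matrix (Fin n → ZMod d) (Fin n → ZMod d) ℂ)) :
    Submodule ℂ ((Fin n → ZMod d) → ℂ) where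
  carrier := {ψ | ∀ s ∈ S, s.mulVec ψ = ψ}
  add_mem' := by
    intro a b ha hb s hs
    simp [Matrix.mulVec_add, ha s hs, hb s hs]
  zero_mem' := by
    intro s hs
    simp [Matrix.mulVec_zero]
  smul_mem' := by
    intro c a ha s hs
    simp [Matrix.mulVec_smul, ha s hs]

section ElementaryAbelian

variable {p : ℕ} {ι : Type*}

theorem span_zmod_toAddSubmonoid [NeZero p] {V : Type*} [AddCommMonoid V] [Module (ZMod p) V]
    (T : Set V) : (Submodule.span (ZMod p) T).toAddSubmonoid = AddSubmonoid.closure T := by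
  rw [← Submodule.span_nat_eq_addSubmonoidClosure,
    ← Submodule.restrictScalars_span ℕ (ZMod p) ZMod.natCast_zmod_surjective]
  rfl

variable [Fact p.Prime] [Finite ι]

theorem natCard_eq_pow_of_notMem_addSubmonoidClosure {V : Type*} [AddCommMonoid V]
    [Module (ZMod p) V] (v : ι → V) (hgen : AddSubmonoid.closure (Set.range v) = ⊤)
    (hind : ∀ i, v i ∉ AddSubmonoid.closure (v '' {i}ᶜ)) : Nat.card V = p ^ Nat.card ι := by
  let _ : AddCommGroup V := Module.addCommMonoidToAddCommGroup (ZMod p)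
  have hli : LinearIndependent (ZMod p) v := by
    refine linearIndependent_iff_notMem_span.2 fun i hi ↦ hind i ?_
    rwa [← Set.compl_eq_univ_sdiff, ← Submodule.mem_toAddSubmonoid, span_zmod_toAddSubmonoid] at hi
  have hspan : ⊤ ≤ Submodule.span (ZMod p) (Set.range v) := fun x _ ↦ by
    rw [← Submodule.mem_toAddSubmonoid, span_zmod_toAddSubmonoid, hgen]
    exact AddSubmonoid.mem_top x
  let b := Module.Basis.mk hli hspan
  have : Module.Finite (ZMod p) V := .of_basis b
  rw [Module.natCard_eq_pow_finrank (K := ZMod p), Module.finrank_eq_nat_card_basis b,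
    Nat.card_zmod]

theorem natCard_eq_pow_of_notMem_submonoidClosure {M : Type*} [CommMonoid M]
    (hpow : ∀ x : M, x ^ p = 1) (s : ι → M) (hgen : Submonoid.closure (Set.range s) = ⊤)
    (hind : ∀ i, s i ∉ Submonoid.closure (s '' {i}ᶜ)) : Nat.card M = p ^ Nat.card ι := by
  let _ : Module (ZMod p) (Additive M) := AddCommMonoid.zmodModule hpow
  have hclosure (T : Set M) : AddSubmonoid.closure (Additive.toMul ⁻¹' T) =
      (Submonoid.closure T).toAddSubmonoid := (Submonoid.toAddSubmonoid_closure T).symm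
  refine natCard_eq_pow_of_notMem_addSubmonoidClosure (V := Additive M) (Additive.ofMul ∘ s) ?_ ?_
  · exact (hclosure (Set.range s)).trans (congrArg Submonoid.toAddSubmonoid hgen)
  · exact fun i hi ↦ hind i ((hclosure (s '' {i}ᶜ)).le hi)

open scoped IsMulCommutative in
theorem natCard_submonoidClosure_range_eq_pow {M : Type*} [Monoid M] (s : ι → M)
    (hcomm : ∀ i j, s i * s j = s j * s i) (hpow : ∀ i, s i ^ p = 1)
    (hind : ∀ i, s i ∉ Submonoid.closure (s '' {i}ᶜ)) :
    Nat.card (Submonoid.closure (Set.range s)) = p ^ Nat.card ι := by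
  let S := Submonoid.closure (Set.range s)
  have : IsMulCommutative S := Submonoid.isMulCommutative_closure M <| by
    rintro _ ⟨i, rfl⟩ _ ⟨j, rfl⟩
    exact hcomm i j
  let t (i : ι) : S := ⟨s i, Submonoid.subset_closure ⟨i, rfl⟩⟩
  have hgen : Submonoid.closure (Set.range t) = ⊤ := by
    rw [← Submonoid.closure_closure_coe_preimage (s := Set.range s)]
    congr 1
    ext x
    simp [t, Subtype.ext_iff]
  have hexp (x : S) : x ^ p = 1 := by
    have hker : Submonoid.closure (Set.range t) ≤ MonoidHom.mker (powMonoidHom p : S →* S) := by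
      rw [Submonoid.closure_le]
      rintro _ ⟨i, rfl⟩
      exact Subtype.ext (hpow i)
    exact hker (hgen ▸ Submonoid.mem_top x)
  refine natCard_eq_pow_of_notMem_submonoidClosure hexp t hgen fun i hi ↦ hind i ?_
  have hmap := Submonoid.mem_map_of_mem S.subtype hi
  rwa [MonoidHom.map_mclosure, ← Set.image_comp] at hmap

end ElementaryAbelian

section TraceFormula

variable {k : Type*} [Field k]

theorem finrank_invariants_mul_natCard [CharZero k] {G V : Type*} [Group G] [Finite G]
    [AddCommGroup V] [Module k V] [FiniteDimensional k V] (ρ : Representation k G V)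
    (hρ : ∀ g ≠ 1, ρ.character g = 0) :
    Module.finrank k ρ.invariants * Nat.card G = Module.finrank k V := by
  have := Fintype.ofFinite G
  have hcard : (Nat.card G : k) ≠ 0 := Nat.cast_ne_zero.2 Nat.card_pos.ne'
  let _ : Invertible (Nat.card G : k) := invertibleOfNonzero hcard
  have haverage := ρ.card_inv_mul_sum_char_eq_finrank
  rw [Fintype.sum_eq_single 1 hρ, ρ.char_one, inv_mul_eq_iff_eq_mul₀ hcard] at haverage
  rw [mul_comm]
  exact_mod_cast haverage.symm

variable {ι : Type*} [Fintype ι] [DecidableEq ι]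

/-- The matrix representation given by a homomorphism `f` to square matrices, acting on column
vectors; for the inclusion of a group of matrices its invariants are the vectors fixed by the
group. -/
def matrixRep {G : Type*} [Monoid G] (f : G →* Matrix ι ι k) : Representation k G (ι → k) :=
  (Matrix.toLinAlgEquiv' : Matrix ι ι k ≃ₐ[k] _).toMonoidHom.comp f

theorem finrank_invariants_matrixRep_mul_natCard [CharZero k] {G : Type*} [Group G] [Finite G]
    (f : G →* Matrix ι ι k) (htrace : ∀ g ≠ 1, (f g).trace = 0) :
    Module.finrank k (matrixRep f).invariants * Nat.card G = Fintype.card ι := by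
  rw [finrank_invariants_mul_natCard, Module.finrank_fintype_fun_eq_card]
  exact fun g hg ↦ (Matrix.trace_toLin'_eq _).trans (htrace g hg)

end TraceFormula

theorem sum_addChar_dotProduct_eq_zero {R R' ι : Type*} [CommRing R] [Fintype R] [CommRing R']
    [IsDomain R'] [Fintype ι] [DecidableEq ι] {ψ : AddChar R R'} (hψ : ψ.IsPrimitive) {u : ι → R}
    (hu : u ≠ 0) : ∑ x, ψ (u ⬝ᵥ x) = 0 := by
  obtain ⟨i, hi⟩ := Function.ne_iff.1 hu
  obtain ⟨a, ha⟩ := AddChar.ne_one_iff.1 (hψ hi)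
  let χ : AddChar (ι → R) R' := ψ.compAddMonoidHom (AddMonoidHom.mk' (u ⬝ᵥ ·) (dotProduct_add u))
  have hχ : χ ≠ 1 := AddChar.ne_one_iff.2 ⟨Pi.single i a, by simpa [χ] using ha⟩
  exact AddChar.sum_eq_zero_of_ne_one hχ

section Pauli

variable {d n : ℕ}

theorem dotp_eq_dotProduct (A B : Fin n → ZMod d) : dotp A B = A ⬝ᵥ B := rfl

variable [NeZero d]

theorem finite_pauliSet : (PauliSet d n).Finite := by
  refine (Set.finite_range fun x : ZMod d × (Fin n → ZMod d) × (Fin n → ZMod d) ↦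
    q d ^ x.1.val • PauliWord d n x.2.1 x.2.2).subset ?_
  rintro _ ⟨k, U, V, rfl⟩
  exact ⟨(k, U, V), rfl⟩

theorem q_pow_val (x : ZMod d) : q d ^ x.val = ZMod.stdAddChar x := by
  rw [ZMod.stdAddChar_apply, ZMod.toCircle_apply, q, ← Complex.exp_nat_mul]
  congr 1
  ring

theorem pauliWord_apply (U V J K : Fin n → ZMod d) :
    PauliWord d n U V J K = if J = K + V then ZMod.stdAddChar (U ⬝ᵥ J) else 0 := by
  simp only [PauliWord, of_apply, q_pow_val, dotp_eq_dotProduct]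

@[simp]
theorem pauliWord_zero_zero : PauliWord d n 0 0 = 1 := by
  ext J K
  simp [pauliWord_apply, one_apply]

theorem pauliWord_mul_pauliWord (U V U' V' : Fin n → ZMod d) :
    PauliWord d n U V * PauliWord d n U' V' =
      (ZMod.stdAddChar (-(U' ⬝ᵥ V)) : ℂ) • PauliWord d n (U + U') (V + V') := by
  ext J L
  have hshift : J - V = L + V' ↔ J = L + (V + V') := by
    rw [sub_eq_iff_eq_add, add_assoc, add_comm V']
  have hphase : U ⬝ᵥ J + U' ⬝ᵥ (J - V) = -(U' ⬝ᵥ V) + (U + U') ⬝ᵥ J := by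
    rw [dotProduct_sub, add_dotProduct]
    ring
  calc (PauliWord d n U V * PauliWord d n U' V') J L
      = PauliWord d n U V J (J - V) * PauliWord d n U' V' (J - V) L := by
        rw [mul_apply]
        refine Fintype.sum_eq_single _ fun K hK ↦ ?_
        rw [pauliWord_apply, if_neg fun h ↦ hK (eq_sub_of_add_eq h.symm), zero_mul]
    _ = ((ZMod.stdAddChar (-(U' ⬝ᵥ V)) : ℂ) • PauliWord d n (U + U') (V + V')) J L := by
        simp only [pauliWord_apply, sub_add_cancel, if_true, hshift, Matrix.smul_apply, smul_eq_mul,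
          mul_ite, mul_zero, ← AddChar.map_add_eq_mul, hphase]

theorem pauliWord_pow (U V : Fin n → ZMod d) (m : ℕ) :
    PauliWord d n U V ^ m =
      (ZMod.stdAddChar (-((m.choose 2 : ZMod d) * (U ⬝ᵥ V))) : ℂ) •
        PauliWord d n (m • U) (m • V) := by
  induction m with
  | zero => simp
  | succ m ih =>
    have hphase : -((m.choose 2 : ZMod d) * (U ⬝ᵥ V)) + -(U ⬝ᵥ m • V) =
        -(((m + 1).choose 2 : ZMod d) * (U ⬝ᵥ V)) := by
      rw [Nat.choose_succ_succ' m 1, Nat.choose_one_right, dotProduct_smul, nsmul_eq_mul]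
      push_cast
      ring
    rw [pow_succ, ih, smul_mul_assoc, pauliWord_mul_pauliWord, smul_smul,
      ← AddChar.map_add_eq_mul, hphase, ← succ_nsmul, ← succ_nsmul]

theorem exists_pow_eq_smul_one_of_mem_pauliSet {g : Matrix (Fin n → ZMod d) (Fin n → ZMod d) ℂ}
    (hg : g ∈ PauliSet d n) : ∃ c : ℂ, g ^ d = c • 1 := by
  obtain ⟨k, U, V, rfl⟩ := hg
  have htorsion (X : Fin n → ZMod d) : d • X = 0 := by
    ext
    simp
  rw [smul_pow, pauliWord_pow, htorsion, htorsion, pauliWord_zero_zero, smul_smul]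
  exact ⟨_, rfl⟩

theorem trace_pauliWord {U V : Fin n → ZMod d} (hword : ¬(U = 0 ∧ V = 0)) :
    (PauliWord d n U V).trace = 0 := by
  by_cases hV : V = 0
  · have hU : U ≠ 0 := fun hU ↦ hword ⟨hU, hV⟩
    calc (PauliWord d n U V).trace = ∑ J, ZMod.stdAddChar (U ⬝ᵥ J) := by
          simp [Matrix.trace, pauliWord_apply, hV]
      _ = 0 := sum_addChar_dotProduct_eq_zero (ZMod.isPrimitive_stdAddChar d) hU
  · simp [Matrix.trace, pauliWord_apply, hV]

theorem trace_eq_zero_or_eq_smul_one_of_mem_pauliSet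
    {g : Matrix (Fin n → ZMod d) (Fin n → ZMod d) ℂ} (hg : g ∈ PauliSet d n) :
    g.trace = 0 ∨ ∃ c : ℂ, g = c • 1 := by
  obtain ⟨k, U, V, rfl⟩ := hg
  by_cases hword : U = 0 ∧ V = 0
  · right
    rw [hword.1, hword.2, pauliWord_zero_zero]
    exact ⟨_, rfl⟩
  · left
    rw [trace_smul, trace_pauliWord hword, smul_zero]

end Pauli

/-- A monoid of matrices has no nontrivial scalars if its only scalar matrix is the identity, the
condition imposed on stabilizer groups. The conclusion is `c • 1 = 1` rather than `c = 1` because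
for empty `ι` every scalar matrix is the identity. -/
def HasNoNontrivialScalars {k ι : Type*} [Semiring k] [Fintype ι] [DecidableEq ι]
    (S : Submonoid (Matrix ι ι k)) : Prop :=
  ∀ c : k, c • (1 : Matrix ι ι k) ∈ S → c • (1 : Matrix ι ι k) = 1

namespace HasNoNontrivialScalars

variable {d n : ℕ} [NeZero d] {S : Submonoid (Matrix (Fin n → ZMod d) (Fin n → ZMod d) ℂ)}

theorem pow_eq_one (hscal : HasNoNontrivialScalars S) (hS : ↑S ⊆ PauliSet d n)
    {g : Matrix (Fin n → ZMod d) (Fin n → ZMod d) ℂ} (hg : g ∈ S) : g ^ d = 1 := by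
  obtain ⟨c, hc⟩ := exists_pow_eq_smul_one_of_mem_pauliSet (hS hg)
  rw [hc]
  exact hscal c (hc ▸ pow_mem hg d)

theorem trace_eq_zero (hscal : HasNoNontrivialScalars S) (hS : ↑S ⊆ PauliSet d n)
    {g : Matrix (Fin n → ZMod d) (Fin n → ZMod d) ℂ} (hg : g ∈ S) (hne : g ≠ 1) :
    g.trace = 0 := by
  refine (trace_eq_zero_or_eq_smul_one_of_mem_pauliSet (hS hg)).resolve_right ?_
  rintro ⟨c, rfl⟩
  exact hne (hscal c hg)

theorem finrank_fixSubspace_mul_natCard (hscal : HasNoNontrivialScalars S)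
    (hS : ↑S ⊆ PauliSet d n) :
    Module.finrank ℂ (FixSubspace d n S) * Nat.card S = d ^ n := by
  have : Finite S := finite_pauliSet.subset hS
  let _ : Group S := groupOfIsUnit fun g ↦
    .of_pow_eq_one (Subtype.ext (hscal.pow_eq_one hS g.2)) (NeZero.ne d)
  have hfix : FixSubspace d n S = (matrixRep S.subtype).invariants := by
    ext ψ
    exact ⟨fun h g ↦ h g g.2, fun h g hg ↦ h ⟨g, hg⟩⟩
  have htrace (g : S) (hg : g ≠ 1) : (S.subtype g).trace = 0 :=
    hscal.trace_eq_zero hS g.2 (by simpa using hg)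
  rw [hfix, finrank_invariants_matrixRep_mul_natCard S.subtype htrace]
  simp

end HasNoNontrivialScalars

theorem card_prime_generated_and_unique_state (d n r : ℕ) [NeZero d]
    (hd : 2 ≤ d) (hdp : d.Prime) (hn : 1 ≤ n)
    (S : Set (Matrix (Fin n → ZMod d) (Fin n → ZMod d) ℂ))
    (hSsub : S ⊆ PauliSet d n)
    (hS1 : (1 : Matrix (Fin n → ZMod d) (Fin n → ZMod d) ℂ) ∈ S)
    (hSmul : ∀ a ∈ S, ∀ b ∈ S, a * b ∈ S)
    (hSinv : ∀ a ∈ S, ∃ b ∈ S, a * b = 1)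
    (hScomm : ∀ a ∈ S, ∀ b ∈ S, a * b = b * a)
    (hSscal : ∀ c : ℂ, c • (1 : Matrix (Fin n → ZMod d) (Fin n → ZMod d) ℂ) ∈ S →
      c • (1 : Matrix (Fin n → ZMod d) (Fin n → ZMod d) ℂ) = 1)
    (s : Fin r → Matrix (Fin n → ZMod d) (Fin n → ZMod d) ℂ)
    (hgen : S = (Submonoid.closure (Set.range s) : Set _))
    (hind : ∀ i : Fin r, s i ∉ Submonoid.closure {x | ∃ j : Fin r, j ≠ i ∧ x = s j}) :
    Nat.card S = d ^ r ∧
    (Module.finrank ℂ (FixSubspace d n S) = 1 ↔ r = n) := by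
  subst hgen
  have : Fact d.Prime := ⟨hdp⟩
  have hscal : HasNoNontrivialScalars (Submonoid.closure (Set.range s)) := hSscal
  have hmem (i : Fin r) : s i ∈ Submonoid.closure (Set.range s) :=
    Submonoid.subset_closure ⟨i, rfl⟩
  have hothers (i : Fin r) : s '' {i}ᶜ = {x | ∃ j : Fin r, j ≠ i ∧ x = s j} := by
    ext x
    simp [eq_comm]
  have hcard : Nat.card (Submonoid.closure (Set.range s)) = d ^ r := by
    simpa using natCard_submonoidClosure_range_eq_pow s
      (fun i j ↦ hScomm _ (hmem i) _ (hmem j))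
      (fun i ↦ hscal.pow_eq_one hSsub (hmem i))
      (fun i ↦ (hothers i).symm ▸ hind i)
  have hdim := hscal.finrank_fixSubspace_mul_natCard hSsub
  rw [hcard] at hdim
  refine ⟨hcard, ?_⟩
  calc Module.finrank ℂ (FixSubspace d n (Submonoid.closure (Set.range s))) = 1
      ↔ Module.finrank ℂ (FixSubspace d n (Submonoid.closure (Set.range s))) * d ^ r = d ^ r :=
        (mul_eq_right₀ (pow_ne_zero r hdp.ne_zero)).symm
    _ ↔ r = n := by rw [hdim, Nat.pow_right_inj hd, eq_comm]
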